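/- Let r_k > 0 (k ≥ 2) be step ratios, and let ϑ^{(2,n)}_{n−j} be the DOC kernels associated with the BDF2 kernels d^{(2,n)}_0 = d₀(r_n,0), d^{(2,n)}_1 = d₁(r_n,0), d^{(2,n)}_j = 0 (j ≥ 2), defined by ϑ^{(2,n)}_0 = 1/d^{(2,n)}_0 and ϑ^{(2,n)}_{n−j} = −(1/d^{(2,j)}_0)·Σ_{i=j+1}^{n} ϑ^{(2,n)}_{n−i} d^{(2,i)}_{i−j} for 2 ≤ j ≤ n−1. Then for every n ≥ 2, Σ_{j=2}^{n} ϑ^{(2,n)}_{n−j} = 1 − ∏_{i=2}^{n} r_i/(1+2r_i) < 1. -/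

import Mathlib

/-- BDF coefficient function `d₀(x,y)`; note `d₀(r,0) = (1+2r)/(1+r)`. -/
noncomputable def d0 (x y : ℝ) : ℝ := (1 + 2*x)/(1 + x) + x*y/(1 + y + x*y)

/-- BDF coefficient function `d₁(x,y)`; note `d₁(r,0) = -r/(1+r)`. -/
noncomputable def d1 (x y : ℝ) : ℝ :=
  -(x/(1 + x)) - x*y/(1 + y + x*y) - (x*y^2/(1 + y + x*y)) * ((1 + x)/(1 + y))

/-- The BDF2 kernels `d^{(2,n)}_j`: `d^{(2,n)}_0 = d₀(r_n,0)`, `d^{(2,n)}_1 = d₁(r_n,0)`,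
and `d^{(2,n)}_j = 0` for `j ≥ 2`. -/
noncomputable def dk2 (r : ℕ → ℝ) (n j : ℕ) : ℝ :=
  if j = 0 then d0 (r n) 0 else if j = 1 then d1 (r n) 0 else 0

/-- Sum identity for the BDF2 DOC kernels (Lemma 2.1): writing `ϑ n j` for `ϑ^{(2,n)}_{n-j}`,
one has `Σ_{j=2}^n ϑ^{(2,n)}_{n-j} = 1 - ∏_{i=2}^n r_i/(1+2r_i) < 1` for every `n ≥ 2`. -/
theorem bdf2_doc_sum
    (r : ℕ → ℝ) (hr : ∀ k, 2 ≤ k → 0 < r k)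
    (ϑ : ℕ → ℕ → ℝ)
    (hϑdiag : ∀ n, 2 ≤ n → ϑ n n = 1 / dk2 r n 0)
    (hϑrec : ∀ n j, 2 ≤ j → j < n →
      ϑ n j = -(1 / dk2 r j 0) * ∑ i ∈ Finset.Icc (j+1) n, ϑ n i * dk2 r i (i - j)) :
    ∀ n, 2 ≤ n →
      (∑ j ∈ Finset.Icc 2 n, ϑ n j) = 1 - ∏ i ∈ Finset.Icc 2 n, r i / (1 + 2 * r i)
        ∧ (∑ j ∈ Finset.Icc 2 n, ϑ n j) < 1 := by
  have key : ∀ k m, 2 ≤ m →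
      ϑ (m + k) m = (1 + r m) / r m * ∏ i ∈ Finset.Icc m (m + k), r i / (1 + 2 * r i) ∧
      (∑ j ∈ Finset.Icc m (m + k), ϑ (m + k) j)
        = 1 - ∏ i ∈ Finset.Icc m (m + k), r i / (1 + 2 * r i) := by
    intro k
    induction k with
    | zero =>
      intro m hm
      have h := hr m hm
      have h1 : 1 + r m ≠ 0 := by positivity
      have h2 : 1 + 2 * r m ≠ 0 := by positivity
      have e := hϑdiag m hm
      simp only [dk2, d0] at e
      simp only [add_zero, Finset.Icc_self, Finset.sum_singleton, Finset.prod_singleton]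
      rw [e]
      constructor
      · simp
        field_simp
      · simp
        field_simp
        ring
    | succ k ih =>
      intro m hm
      have h := hr m hm
      have h' := hr (m + 1) (by omega)
      have h1 : 1 + r m ≠ 0 := by positivity
      have h2 : 1 + 2 * r m ≠ 0 := by positivity
      have h3 : 1 + r (m + 1) ≠ 0 := by positivity
      obtain ⟨ih1, ih2⟩ := ih (m + 1) (by omega)
      have en : m + 1 + k = m + (k + 1) := by omega
      rw [en] at ih1 ih2
      have e := hϑrec (m + (k + 1)) m hm (by omega)
      have es : ∑ i ∈ Finset.Icc (m + 1) (m + (k + 1)), ϑ (m + (k + 1)) i * dk2 r i (i - m)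
          = ϑ (m + (k + 1)) (m + 1) * dk2 r (m + 1) (m + 1 - m) := by
        apply Finset.sum_eq_single_of_mem
        · simp
        · intro b hb hne
          rw [Finset.mem_Icc] at hb
          have a1 : b - m ≠ 0 := by omega
          have a2 : b - m ≠ 1 := by omega
          simp [dk2, a1, a2]
      have ins : Finset.Icc m (m + (k + 1)) = insert m (Finset.Icc (m + 1) (m + (k + 1))) := by
        ext x
        simp only [Finset.mem_Icc, Finset.mem_insert]
        omega
      have nin : m ∉ Finset.Icc (m + 1) (m + (k + 1)) := by simp
      rw [es, ih1] at e
      rw [ins, Finset.sum_insert nin, Finset.prod_insert nin, ih2]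
      generalize (∏ i ∈ Finset.Icc (m + 1) (m + (k + 1)), r i / (1 + 2 * r i)) = P at *
      have e2 : ϑ (m + (k + 1)) m = (1 + r m) / (1 + 2 * r m) * P := by
        rw [e]
        simp [dk2, d0, d1]
        field_simp
        simp
      rw [e2]
      constructor
      · field_simp
      · field_simp
        ring
  intro n hn
  obtain ⟨k, rfl⟩ := Nat.exists_eq_add_of_le hn
  have h := (key k 2 le_rfl).2
  refine ⟨h, ?_⟩
  rw [h]
  have : 0 < ∏ i ∈ Finset.Icc 2 (2 + k), r i / (1 + 2 * r i) := by
    apply Finset.prod_pos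
    intro i hi
    have := hr i (Finset.mem_Icc.1 hi).1
    positivity
  linarith
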